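/- arXiv:2109.14718 — 3 statements merged into one kernel-verified Lean document; each statement's English description precedes it below -/
import Mathlib

section
/- (Paper's Lemma 2.) Let α be a type of atomic propositions and let (ŝ_i)_{i∈I} = ((s_i⁺, s_i⁻))_{i∈I} be a family of partial states over α with I nonempty and each partial state consistent (s_i⁺ ∩ s_i⁻ = ∅). If an atomic proposition p is not in the collapsed set, i.e., p ∉ (⋂_{i∈I} s_i⁺) ∪ (⋂_{i∈I} s_i⁻), then both p and ¬p are consistent with the DNF: there exist valuations v, w : α → Bool, each satisfying the DNF, such that v p = true and w p = false. -/
/-- A valuation `v` satisfies the partial state `(s⁺, s⁻)` if every atom in `s⁺`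
is true under `v` and every atom in `s⁻` is false under `v`. -/
def Satisfies {α : Type*} (v : α → Bool) (s : Set α × Set α) : Prop :=
  (∀ p ∈ s.1, v p = true) ∧ (∀ q ∈ s.2, v q = false)

/-!
The valuations satisfying a consistent partial state `(s⁺, s⁻)`, viewed as sets of true atoms, form
the interval from `s⁺` to the complement of `s⁻`. Its top makes every atom outside `s⁻` true, and
its bottom makes every atom outside `s⁺` false. An atom outside the collapsed DNF lies outside some
`s_j⁻` and outside some `s_i⁺`, in general with `i ≠ j`.
-/

section PartialState

variable {α : Type*} {s : Set α × Set α} {p : α}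

theorem satisfies_decide_mem_iff {t : Set α} [DecidablePred (· ∈ t)] :
    Satisfies (fun q => decide (q ∈ t)) s ↔ t ∈ Set.Icc s.1 s.2ᶜ := by
  simp only [Satisfies, decide_eq_true_eq, decide_eq_false_iff_not, Set.mem_Icc,
    Set.subset_compl_comm (s := t), Set.subset_def, Set.mem_compl_iff]

theorem exists_satisfies_and_eq_true (hs : Disjoint s.1 s.2) (hp : p ∉ s.2) :
    ∃ v : α → Bool, Satisfies v s ∧ v p = true := by
  classical
  exact ⟨fun q => decide (q ∈ s.2ᶜ),
    satisfies_decide_mem_iff.2 (Set.right_mem_Icc.2 hs.subset_compl_right), decide_eq_true hp⟩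

theorem exists_satisfies_and_eq_false (hs : Disjoint s.1 s.2) (hp : p ∉ s.1) :
    ∃ v : α → Bool, Satisfies v s ∧ v p = false := by
  classical
  exact ⟨fun q => decide (q ∈ s.1),
    satisfies_decide_mem_iff.2 (Set.left_mem_Icc.2 hs.subset_compl_right), decide_eq_false hp⟩

end PartialState

theorem stmt_7 {α : Type*} {I : Type*} [Nonempty I] (sp sn : I → Set α)
    (hcons : ∀ i, sp i ∩ sn i = ∅) (p : α)
    (hp : p ∉ (⋂ i, sp i) ∪ (⋂ i, sn i)) :
    (∃ v : α → Bool, (∃ i, Satisfies v (sp i, sn i)) ∧ v p = true) ∧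
    (∃ w : α → Bool, (∃ i, Satisfies w (sp i, sn i)) ∧ w p = false) := by
  have hdisj (i : I) : Disjoint (sp i) (sn i) := Set.disjoint_iff_inter_eq_empty.2 (hcons i)
  simp only [Set.mem_union, Set.mem_iInter, not_or, not_forall] at hp
  obtain ⟨⟨i, hi⟩, ⟨j, hj⟩⟩ := hp
  obtain ⟨v, hv, hvp⟩ := exists_satisfies_and_eq_true (s := (sp j, sn j)) (hdisj j) hj
  obtain ⟨w, hw, hwp⟩ := exists_satisfies_and_eq_false (s := (sp i, sn i)) (hdisj i) hi
  exact ⟨⟨v, ⟨j, hv⟩, hvp⟩, ⟨w, ⟨i, hw⟩, hwp⟩⟩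
end

section
/- (Converse direction of the paper's Lemma 2, as used in Theorem 1.) Let α be a type of atomic propositions and let (ŝ_i)_{i∈I} = ((s_i⁺, s_i⁻))_{i∈I} be a family of partial states over α with I nonempty and each partial state consistent (s_i⁺ ∩ s_i⁻ = ∅). If an atomic proposition p is determined by the DNF — that is, if every valuation v satisfying the DNF has v p = true, or every valuation v satisfying the DNF has v p = false — then p ∈ (⋂_{i∈I} s_i⁺) ∪ (⋂_{i∈I} s_i⁻). More precisely: if every satisfying valuation has v p = true then p ∈ ⋂_{i∈I} s_i⁺, and if every satisfying valuation has v p = false then p ∈ ⋂_{i∈I} s_i⁻. -/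
namespace Satisfies

variable {α : Type*} {s : Set α × Set α} {p : α}

theorem decide_mem_iff {t : Set α} [DecidablePred (· ∈ t)] :
    Satisfies (fun a => decide (a ∈ t)) s ↔ s.1 ⊆ t ∧ t ⊆ s.2ᶜ := by
  simp only [Satisfies, decide_eq_true_eq, decide_eq_false_iff_not, Set.subset_compl_comm (s := t)]
  rfl

theorem forall_eq_true_iff_mem_fst (hs : Disjoint s.1 s.2) :
    (∀ v, Satisfies v s → v p = true) ↔ p ∈ s.1 := by
  classical
  refine ⟨fun h => ?_, fun hp v hv => hv.1 p hp⟩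
  have least : Satisfies (fun a => decide (a ∈ s.1)) s :=
    decide_mem_iff.2 ⟨subset_rfl, hs.subset_compl_right⟩
  exact of_decide_eq_true (h _ least)

theorem forall_eq_false_iff_mem_snd (hs : Disjoint s.1 s.2) :
    (∀ v, Satisfies v s → v p = false) ↔ p ∈ s.2 := by
  classical
  refine ⟨fun h => ?_, fun hp v hv => hv.2 p hp⟩
  have greatest : Satisfies (fun a => decide (a ∈ s.2ᶜ)) s :=
    decide_mem_iff.2 ⟨hs.subset_compl_right, subset_rfl⟩
  exact Set.notMem_compl_iff.1 (of_decide_eq_false (h _ greatest))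

end Satisfies

theorem stmt_8 {α : Type*} {I : Type*} [Nonempty I] (sp sn : I → Set α)
    (hcons : ∀ i, sp i ∩ sn i = ∅) (p : α) :
    ((∀ v : α → Bool, (∃ i, Satisfies v (sp i, sn i)) → v p = true) →
      p ∈ ⋂ i, sp i) ∧
    ((∀ v : α → Bool, (∃ i, Satisfies v (sp i, sn i)) → v p = false) →
      p ∈ ⋂ i, sn i) := by
  have hdisj (i : I) : Disjoint (sp i) (sn i) := Set.disjoint_iff_inter_eq_empty.2 (hcons i)
  constructor
  · intro h
    exact Set.mem_iInter.2 fun i =>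
      (Satisfies.forall_eq_true_iff_mem_fst (hdisj i)).1 fun v hv => h v ⟨i, hv⟩
  · intro h
    exact Set.mem_iInter.2 fun i =>
      (Satisfies.forall_eq_false_iff_mem_snd (hdisj i)).1 fun v hv => h v ⟨i, hv⟩
end

section
/- (Paper's Theorem 1: the collapsed DNF is the largest set of propositions fully determined by the DNF.) Let α be a type of atomic propositions and let (ŝ_i)_{i∈I} = ((s_i⁺, s_i⁻))_{i∈I} be a family of partial states over α with I nonempty and each partial state consistent (s_i⁺ ∩ s_i⁻ = ∅). Then the set of atomic propositions whose truth value is fully determined by the DNF equals the collapsed set: { p : α | ∀ valuations v, w : α → Bool, if v satisfies the DNF and w satisfies the DNF then v p = w p } = (⋂_{i∈I} s_i⁺) ∪ (⋂_{i∈I} s_i⁻). In particular, every proposition in the collapsed DNF has its value fixed by the DNF, and for every proposition outside the collapsed DNF there exist satisfying valuations assigning it opposite values. -/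
/-! A proposition has a constant value on the models of the DNF iff it is true in all of them or
false in all of them, that is, true in all models of every disjunct or false in all models of every
disjunct. A consistent partial state `(s⁺, s⁻)` has a least model, with `s⁺` as its set of true
atoms, and a greatest one, with `(s⁻)ᶜ`; so it forces to be true only the atoms of `s⁺`, and to be
false only those of `s⁻`. -/

theorem forall_apply_eq_iff_forall_eq_true_or_forall_eq_false {β : Type*} {P : β → Prop}
    {f : β → Bool} :
    (∀ x y, P x → P y → f x = f y) ↔ (∀ x, P x → f x = true) ∨ (∀ x, P x → f x = false) := by
  constructor
  · intro hconst
    by_cases htrue : ∃ x, P x ∧ f x = true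
    · obtain ⟨x, hx, hfx⟩ := htrue
      exact .inl fun y hy => (hconst y x hy hx).trans hfx
    · exact .inr fun y hy => Bool.eq_false_of_not_eq_true fun hfy => htrue ⟨y, hy, hfy⟩
  · rintro (htrue | hfalse) x y hx hy
    · rw [htrue x hx, htrue y hy]
    · rw [hfalse x hx, hfalse y hy]

section PartialState

variable {α : Type*} {s : Set α × Set α} {p : α}

theorem satisfies_boolIndicator_iff {t : Set α} :
    Satisfies t.boolIndicator s ↔ s.1 ⊆ t ∧ s.2 ⊆ tᶜ := by
  simp only [Satisfies, ← Set.mem_iff_boolIndicator, ← Set.notMem_iff_boolIndicator,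
    Set.subset_def, Set.mem_compl_iff]

theorem forall_satisfies_eq_true_iff_mem_fst (hs : Disjoint s.1 s.2) :
    (∀ v, Satisfies v s → v p = true) ↔ p ∈ s.1 := by
  refine ⟨fun h => ?_, fun hp v hv => hv.1 p hp⟩
  have least_model : Satisfies s.1.boolIndicator s :=
    satisfies_boolIndicator_iff.2 ⟨subset_rfl, hs.subset_compl_left⟩
  exact (s.1.mem_iff_boolIndicator p).2 (h _ least_model)

theorem forall_satisfies_eq_false_iff_mem_snd (hs : Disjoint s.1 s.2) :
    (∀ v, Satisfies v s → v p = false) ↔ p ∈ s.2 := by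
  refine ⟨fun h => ?_, fun hp v hv => hv.2 p hp⟩
  have greatest_model : Satisfies s.2ᶜ.boolIndicator s :=
    satisfies_boolIndicator_iff.2 ⟨hs.subset_compl_right, (compl_compl s.2).superset⟩
  exact Set.notMem_compl_iff.1 ((s.2ᶜ.notMem_iff_boolIndicator p).2 (h _ greatest_model))

end PartialState

theorem stmt_9 {α : Type*} {I : Type*} [Nonempty I] (sp sn : I → Set α)
    (hcons : ∀ i, sp i ∩ sn i = ∅) :
    {p : α | ∀ v w : α → Bool,
        (∃ i, Satisfies v (sp i, sn i)) → (∃ i, Satisfies w (sp i, sn i)) →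
        v p = w p}
      = (⋂ i, sp i) ∪ (⋂ i, sn i) := by
  have hdisj (i : I) : Disjoint (sp i) (sn i) := Set.disjoint_iff_inter_eq_empty.2 (hcons i)
  ext p
  calc
    (∀ v w : α → Bool, (∃ i, Satisfies v (sp i, sn i)) → (∃ i, Satisfies w (sp i, sn i)) →
        v p = w p)
      ↔ (∀ v, (∃ i, Satisfies v (sp i, sn i)) → v p = true) ∨
          (∀ v, (∃ i, Satisfies v (sp i, sn i)) → v p = false) :=
        forall_apply_eq_iff_forall_eq_true_or_forall_eq_false
    _ ↔ (∀ i v, Satisfies v (sp i, sn i) → v p = true) ∨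
          (∀ i v, Satisfies v (sp i, sn i) → v p = false) := by
        simp only [exists_imp, forall_comm (α := I)]
    _ ↔ (∀ i, p ∈ sp i) ∨ (∀ i, p ∈ sn i) :=
        or_congr (forall_congr' fun i => forall_satisfies_eq_true_iff_mem_fst (hdisj i))
          (forall_congr' fun i => forall_satisfies_eq_false_iff_mem_snd (hdisj i))
    _ ↔ p ∈ (⋂ i, sp i) ∪ (⋂ i, sn i) := by
        simp only [Set.mem_union, Set.mem_iInter]
end
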